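/- arXiv:1609.03036 — 2 statements merged into one kernel-verified Lean document; each statement's English description precedes it below -/
import Mathlib

section
/- ζ(3) = (2π²/3)·log 2 − 6·(log 2)² + (2/3)·(log 2)³ + 4·(log 2)²·log(log 2) + 16·(log 2)² · ∑_{n=1}^∞ (−1)^{n+1}·ζ(2n)/(2n(2n+1)(2n+2)) · (log 2/(2π))^{2n}. -/
/-!
The identity compares two evaluations of the trilogarithm `Li₃` at `1/2 = e^{-log 2}`.

The closed form `Li₃(1/2) = 7/8 ζ(3) - π²/12 log 2 + (log 2)³/6` (`trilog_half`) is the case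
`z = 1/2` of the three-term relation between `Li₃(z)`, `Li₃(1 - z)` and `Li₃(1 - 1/z)`. That
relation holds because its two sides have the same derivative, by Euler's reflection formula
and Landen's transformation for the dilogarithm, and agree at `z = 1`.

The expansion of `Li₃(e^{-x})` for `0 ≤ x < 1` (`trilog_exp_neg`) comes from integrating
`-log (1 - e^{-x}) = x/2 - log x - log (sinh (x/2) / (x/2))` twice. Euler's product for the sine,
at an imaginary argument, turns the last logarithm into a double sum, and exchanging the order of
summation gives the power series with coefficients `(-1)^{n+1} ζ(2n) / (n (2π)^{2n})`.

Putting `x = log 2` in the expansion and solving for `ζ(3)` gives the formula.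
-/

open Real

/-- The Riemann zeta function, as a real-valued function of a real argument. -/
noncomputable def zetaR (s : ℝ) : ℝ := (riemannZeta s).re

/-! ### Calculus tools -/

lemma eq_of_hasDerivAt_zero {f : ℝ → ℝ} {a b : ℝ} (hab : a ≤ b)
    (hc : ContinuousOn f (Set.Icc a b)) (hd : ∀ x ∈ Set.Ioo a b, HasDerivAt f 0 x) :
    f a = f b := by
  rcases hab.eq_or_lt with rfl | hab
  · rfl
  obtain ⟨c, -, h⟩ := exists_hasDerivAt_eq_slope f (fun _ => 0) hab hc hd
  have : b - a ≠ 0 := by linarith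
  field_simp at h
  linarith

/-- Termwise differentiation of a lacunary power series with bounded coefficients, written so
that the antiderivative is the series with the denominators. -/
lemma hasDerivAt_powerSeries (k e : ℕ) (hk : 1 ≤ k) (b : ℕ → ℝ) (C : ℝ) (hb : ∀ n, |b n| ≤ C)
    {x : ℝ} (hx : |x| < 1) :
    HasDerivAt (fun y : ℝ => ∑' n : ℕ, b n / (k * n + e + 1) * y ^ (k * n + e + 1))
      (∑' n : ℕ, b n * x ^ (k * n + e)) x := by
  obtain ⟨r, hxr, hr1⟩ := exists_between hx
  have hr0 : 0 < r := (abs_nonneg x).trans_lt hxr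
  refine hasDerivAt_tsum_of_isPreconnected (u := fun n => C * r ^ n) (t := Set.Ioo (-r) r)
    (y₀ := 0) (g := fun n y => b n / (k * n + e + 1) * y ^ (k * n + e + 1))
    (g' := fun n y => b n * y ^ (k * n + e))
    ((summable_geometric_of_lt_one hr0.le hr1).mul_left C) isOpen_Ioo isPreconnected_Ioo
    ?_ ?_ ⟨by linarith, hr0⟩ ?_ (abs_lt.mp hxr)
  · intro n y _
    have h := (hasDerivAt_pow (k * n + e + 1) y).const_mul (b n / (k * n + e + 1))
    refine h.congr_deriv ?_
    have : (k * n + e + 1 : ℝ) ≠ 0 := by positivity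
    push_cast
    field_simp
  · intro n y hy
    have hy' : |y| ≤ r := abs_le.mpr ⟨hy.1.le, hy.2.le⟩
    rw [norm_mul, norm_pow, Real.norm_eq_abs, Real.norm_eq_abs]
    have h1 : |y| ^ (k * n + e) ≤ r ^ n :=
      (pow_le_pow_left₀ (abs_nonneg y) hy' _).trans
        (pow_le_pow_of_le_one hr0.le hr1.le (by nlinarith))
    exact mul_le_mul (hb n) h1 (by positivity) ((abs_nonneg _).trans (hb n))
  · simp

/-! ### Polylogarithms on `[-1, 1]` -/

/-- The polylogarithm `Li_s(x) = ∑_{m ≥ 1} x^m / m^s`, with the summation index shifted to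
`m = n + 1`. -/
noncomputable def polylog (s : ℕ) (x : ℝ) : ℝ := ∑' n : ℕ, x ^ (n + 1) / ((n : ℝ) + 1) ^ s

lemma summable_inv_succ_pow {s : ℕ} (hs : 2 ≤ s) :
    Summable (fun n : ℕ => 1 / ((n : ℝ) + 1) ^ s) := by
  have := (summable_nat_add_iff 1).mpr (Real.summable_one_div_nat_pow.mpr (show 1 < s by omega))
  simpa using this

lemma polylog_bound (s n : ℕ) {x : ℝ} (hx : x ∈ Set.Icc (-1 : ℝ) 1) :
    ‖x ^ (n + 1) / ((n : ℝ) + 1) ^ s‖ ≤ 1 / ((n : ℝ) + 1) ^ s := by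
  have : (0 : ℝ) < ((n : ℝ) + 1) ^ s := by positivity
  rw [norm_div, norm_pow, Real.norm_eq_abs, Real.norm_eq_abs, abs_of_pos this]
  gcongr
  exact pow_le_one₀ (abs_nonneg x) (abs_le.mpr hx)

lemma continuousOn_polylog {s : ℕ} (hs : 2 ≤ s) :
    ContinuousOn (polylog s) (Set.Icc (-1) 1) :=
  continuousOn_tsum (fun n => by fun_prop) (summable_inv_succ_pow hs)
    (fun n _ hx => polylog_bound s n hx)

lemma hasDerivAt_polylog (s : ℕ) {x : ℝ} (hx : |x| < 1) (hx0 : x ≠ 0) :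
    HasDerivAt (polylog (s + 1)) (polylog s x / x) x := by
  have h := hasDerivAt_powerSeries 1 0 le_rfl (fun n => 1 / ((n : ℝ) + 1) ^ s) 1 (fun n => by
    rw [abs_of_nonneg (by positivity)]
    exact div_le_one_of_le₀ (one_le_pow₀ (by linarith [n.cast_nonneg (α := ℝ)]))
      (by positivity)) hx
  convert h using 1
  · funext y
    refine tsum_congr fun n => ?_
    have : (n + 1 : ℝ) ≠ 0 := by positivity
    simp only [Nat.cast_one, one_mul, Nat.cast_zero, add_zero]
    field_simp
    ring
  · rw [polylog, ← tsum_div_const]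
    refine tsum_congr fun n => ?_
    simp only [one_mul, add_zero]
    field_simp
    ring

lemma polylog_one_eq {x : ℝ} (hx : |x| < 1) : polylog 1 x = -log (1 - x) := by
  simpa [polylog] using (Real.hasSum_pow_div_log_of_abs_lt_one hx).tsum_eq

lemma polylog_zero (s : ℕ) : polylog s 0 = 0 := by simp [polylog]

lemma zetaR_natCast {s : ℕ} (hs : 2 ≤ s) : zetaR s = ∑' n : ℕ, 1 / ((n : ℝ) + 1) ^ s := by
  have h := zeta_nat_eq_tsum_of_gt_one (show 1 < s by omega)
  have h2 : riemannZeta s = ((∑' n : ℕ, 1 / (n : ℝ) ^ s : ℝ) : ℂ) := by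
    rw [h]; push_cast; rfl
  unfold zetaR
  rw [Complex.ofReal_natCast, h2, Complex.ofReal_re,
    (Real.summable_one_div_nat_pow.mpr (show 1 < s by omega)).tsum_eq_zero_add]
  simp [show s ≠ 0 by omega]

lemma polylog_at_one {s : ℕ} (hs : 2 ≤ s) : polylog s 1 = zetaR s := by
  simp [polylog, zetaR_natCast hs]

lemma polylog_two_at_one : polylog 2 1 = π ^ 2 / 6 := by
  have h := hasSum_zeta_two
  rw [← h.tsum_eq, h.summable.tsum_eq_zero_add]
  simp [polylog]

lemma polylog_three_at_neg_one : polylog 3 (-1) = -(3 / 4) * polylog 3 1 := by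
  have hs : Summable (fun n : ℕ => (1 : ℝ) ^ (n + 1) / ((n : ℝ) + 1) ^ 3) :=
    (summable_inv_succ_pow (by norm_num : 2 ≤ 3)).of_norm_bounded
      (fun n => polylog_bound 3 n ⟨by norm_num, by norm_num⟩)
  have hneg : Summable (fun n : ℕ => (-1 : ℝ) ^ (n + 1) / ((n : ℝ) + 1) ^ 3) :=
    (summable_inv_succ_pow (by norm_num : 2 ≤ 3)).of_norm_bounded
      (fun n => polylog_bound 3 n ⟨by norm_num, by norm_num⟩)
  obtain ⟨f, hf⟩ : ∃ f : ℕ → ℝ, f = fun n : ℕ =>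
      (1 : ℝ) ^ (n + 1) / ((n : ℝ) + 1) ^ 3 + (-1) ^ (n + 1) / ((n : ℝ) + 1) ^ 3 := ⟨_, rfl⟩
  have hfs : Summable f := hf ▸ hs.add hneg
  -- Only the terms of odd index, i.e. of even denominator, survive in `Li₃(1) + Li₃(-1)`.
  have he : ∀ k : ℕ, f (2 * k) = 0 := by
    intro k
    simp only [hf]
    rw [(odd_two_mul_add_one k).neg_one_pow, one_pow]
    ring
  have ho : ∀ k : ℕ, f (2 * k + 1) = 1 / 4 * ((1 : ℝ) ^ (k + 1) / ((k : ℝ) + 1) ^ 3) := by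
    intro k
    simp only [hf]
    rw [show 2 * k + 1 + 1 = 2 * (k + 1) by ring, pow_mul (-1 : ℝ)]
    push_cast
    have : (k + 1 : ℝ) ≠ 0 := by positivity
    rw [show (2 * k + 1 + 1 : ℝ) = 2 * (k + 1) by ring, mul_pow]
    field_simp
    norm_num
  have hsplit := tsum_even_add_odd (hfs.comp_injective (i := fun k => 2 * k)
      (fun a b h => by simpa using h)) (hfs.comp_injective (i := fun k => 2 * k + 1)
      (fun a b h => by simpa using h))
  simp only [he, ho, tsum_zero, zero_add, tsum_mul_left] at hsplit
  have hadd : polylog 3 1 + polylog 3 (-1) = ∑' n, f n := by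
    rw [hf]; exact (hs.tsum_add hneg).symm
  have : ∑' k : ℕ, (1 : ℝ) ^ (k + 1) / ((k : ℝ) + 1) ^ 3 = polylog 3 1 := rfl
  linarith

/-! ### The value of the trilogarithm at `1/2` -/

lemma continuousOn_log_mul_log_one_sub :
    ContinuousOn (fun z : ℝ => log z * log (1 - z)) (Set.Icc (1 / 2) 1) := by
  have hpos : Set.Ioi (0 : ℝ) ∈ nhds (1 : ℝ) := Ioi_mem_nhds one_pos
  have h1 : ContinuousOn (dslope log 1) (Set.Ioi 0) :=
    (continuousOn_dslope hpos).mpr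
      ⟨fun x hx => (continuousAt_log (ne_of_gt hx)).continuousWithinAt,
        differentiableAt_log one_ne_zero⟩
  have h2 : Continuous (fun z : ℝ => (1 - z) * log (1 - z)) :=
    continuous_mul_log.comp (by fun_prop)
  have hsub : Set.Icc (1 / 2 : ℝ) 1 ⊆ Set.Ioi 0 :=
    fun x hx => lt_of_lt_of_le (by norm_num) hx.1
  have h3 := (h1.mono hsub).neg.mul h2.continuousOn
  refine h3.congr fun z _ => ?_
  -- `log z = (z - 1) * dslope log 1 z` moves the zero of `log` onto the singular factor.
  have h4 := sub_smul_dslope log 1 z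
  simp only [smul_eq_mul, log_one, sub_zero] at h4
  simp only [Pi.mul_apply, Pi.neg_apply]
  rw [← h4]; ring

lemma continuousOn_log_half : ContinuousOn log (Set.Icc (1 / 2 : ℝ) 1) := fun x hx =>
  (continuousAt_log (by have := hx.1; intro h; norm_num [h] at this)).continuousWithinAt

lemma continuousOn_polylog_parts {s : ℕ} (hs : 2 ≤ s) :
    ContinuousOn (fun z : ℝ => polylog s z) (Set.Icc (1 / 2) 1) ∧
    ContinuousOn (fun z : ℝ => polylog s (1 - z)) (Set.Icc (1 / 2) 1) ∧
    ContinuousOn (fun z : ℝ => polylog s (1 - 1 / z)) (Set.Icc (1 / 2) 1) := by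
  refine ⟨(continuousOn_polylog hs).mono fun x hx => ⟨by linarith [hx.1], hx.2⟩,
    (continuousOn_polylog hs).comp (by fun_prop)
      fun x hx => ⟨by linarith [hx.2], by linarith [hx.1]⟩,
    (continuousOn_polylog hs).comp ?_ fun x hx => ?_⟩
  · refine continuousOn_const.sub (continuousOn_const.div continuousOn_id fun x hx => ?_)
    have := hx.1
    intro h; norm_num [h] at this
  · obtain ⟨h1, h2⟩ := hx
    have h0 : 0 < x := by linarith
    have h3 : 1 / x ≤ 2 := by rw [div_le_iff₀ h0]; linarith
    have h4 : 0 < 1 / x := by positivity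
    exact ⟨by linarith, by linarith⟩

lemma hasDerivAt_polylog_parts (s : ℕ) {z : ℝ} (hz : z ∈ Set.Ioo (1 / 2 : ℝ) 1) :
    HasDerivAt (fun z : ℝ => polylog (s + 1) z) (polylog s z / z) z ∧
    HasDerivAt (fun z : ℝ => polylog (s + 1) (1 - z)) (-(polylog s (1 - z) / (1 - z))) z ∧
    HasDerivAt (fun z : ℝ => polylog (s + 1) (1 - 1 / z))
      (-(polylog s (1 - 1 / z) * (1 / z + 1 / (1 - z)))) z := by
  obtain ⟨h1, h2⟩ := hz
  have h0 : 0 < z := by linarith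
  have h0' : z ≠ 0 := h0.ne'
  have h5 : 1 - z ≠ 0 := by linarith
  have h5' : z - 1 ≠ 0 := by linarith
  have h3 : 1 / z < 2 := by rw [div_lt_iff₀ h0]; linarith
  have h4 : 1 < 1 / z := by rw [lt_div_iff₀ h0]; linarith
  refine ⟨hasDerivAt_polylog s (abs_lt.mpr ⟨by linarith, h2⟩) h0', ?_, ?_⟩
  · have h := (hasDerivAt_polylog s (x := 1 - z) (abs_lt.mpr ⟨by linarith, by linarith⟩) h5).comp z
      ((hasDerivAt_id z).const_sub 1)
    refine h.congr_deriv ?_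
    ring
  · have hd : HasDerivAt (fun z : ℝ => 1 - 1 / z) (1 / z ^ 2) z := by
      have := (hasDerivAt_inv h0').const_sub 1
      simpa [one_div] using this
    have h := (hasDerivAt_polylog s (x := 1 - 1 / z)
      (abs_lt.mpr ⟨by linarith, by linarith⟩) (by linarith)).comp z hd
    refine h.congr_deriv ?_
    have h6 : 1 - 1 / z = (z - 1) / z := by field_simp
    generalize polylog s (1 - 1 / z) = p
    rw [h6, show 1 - z = -(z - 1) by ring]
    field_simp
    ring

/-- Euler's reflection formula for the dilogarithm. -/
lemma dilog_reflection {z : ℝ} (hz : z ∈ Set.Icc (1 / 2 : ℝ) 1) :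
    polylog 2 z + polylog 2 (1 - z) + log z * log (1 - z) = π ^ 2 / 6 := by
  have hsub : Set.Icc z 1 ⊆ Set.Icc (1 / 2 : ℝ) 1 := Set.Icc_subset_Icc_left hz.1
  obtain ⟨c1, c2, -⟩ := continuousOn_polylog_parts (le_refl 2)
  have h := eq_of_hasDerivAt_zero
    (f := fun z => polylog 2 z + polylog 2 (1 - z) + log z * log (1 - z)) hz.2
    (((c1.add c2).add continuousOn_log_mul_log_one_sub).mono hsub) (fun x hx => ?_)
  · simpa [polylog_zero, polylog_two_at_one] using h
  have hx' : x ∈ Set.Ioo (1 / 2 : ℝ) 1 := ⟨hz.1.trans_lt hx.1, hx.2⟩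
  have h0 : x ≠ 0 := by linarith [hx'.1]
  have h1 : 1 - x ≠ 0 := by linarith [hx'.2]
  obtain ⟨d1, d2, -⟩ := hasDerivAt_polylog_parts 1 hx'
  have d3 := (hasDerivAt_log h0).mul (((hasDerivAt_id x).const_sub 1).log h1)
  refine ((d1.add d2).add d3).congr_deriv ?_
  rw [polylog_one_eq (abs_lt.mpr ⟨by linarith [hx'.1], hx'.2⟩),
    polylog_one_eq (abs_lt.mpr ⟨by linarith [hx'.2], by linarith [hx'.1]⟩)]
  simp only [id]
  rw [sub_sub_cancel]
  field_simp
  ring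

/-- Landen's transformation of the dilogarithm. -/
lemma dilog_landen {z : ℝ} (hz : z ∈ Set.Icc (1 / 2 : ℝ) 1) :
    polylog 2 (1 - 1 / z) + polylog 2 (1 - z) + log z ^ 2 / 2 = 0 := by
  have hsub : Set.Icc z 1 ⊆ Set.Icc (1 / 2 : ℝ) 1 := Set.Icc_subset_Icc_left hz.1
  obtain ⟨-, c2, c3⟩ := continuousOn_polylog_parts (le_refl 2)
  have h := eq_of_hasDerivAt_zero
    (f := fun z => polylog 2 (1 - 1 / z) + polylog 2 (1 - z) + log z ^ 2 / 2) hz.2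
    (((c3.add c2).add ((continuousOn_log_half.pow 2).div_const 2)).mono hsub) (fun x hx => ?_)
  · simpa [polylog_zero] using h
  have hx' : x ∈ Set.Ioo (1 / 2 : ℝ) 1 := ⟨hz.1.trans_lt hx.1, hx.2⟩
  have hpos : 0 < x := by linarith [hx'.1]
  have h0 : x ≠ 0 := hpos.ne'
  have h1 : 1 - x ≠ 0 := by linarith [hx'.2]
  have h3 : 1 / x < 2 := by rw [div_lt_iff₀ hpos]; linarith [hx'.1]
  have h4 : 1 < 1 / x := by rw [lt_div_iff₀ hpos]; linarith [hx'.2]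
  obtain ⟨-, d2, d3⟩ := hasDerivAt_polylog_parts 1 hx'
  have d4 := ((hasDerivAt_log h0).pow 2).div_const 2
  refine ((d3.add d2).add d4).congr_deriv ?_
  rw [polylog_one_eq (abs_lt.mpr ⟨by linarith, by linarith⟩),
    polylog_one_eq (abs_lt.mpr ⟨by linarith [hx'.2], by linarith [hx'.1]⟩)]
  rw [sub_sub_cancel, sub_sub_cancel, one_div, log_inv]
  field_simp
  ring

/-- `Li₃(1/2)`, from the three-term relation between `Li₃(z)`, `Li₃(1 - z)` and
`Li₃(1 - 1/z)` on `[1/2, 1]`, whose derivative is given by the two dilogarithm identities. -/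
lemma trilog_half :
    polylog 3 (1 / 2) = 7 / 8 * polylog 3 1 - π ^ 2 / 12 * log 2 + log 2 ^ 3 / 6 := by
  obtain ⟨c1, c2, c3⟩ := continuousOn_polylog_parts (show 2 ≤ 3 by norm_num)
  have cl := continuousOn_log_half
  have h := eq_of_hasDerivAt_zero (a := 1 / 2) (b := 1)
    (f := fun z => polylog 3 z + polylog 3 (1 - z) + polylog 3 (1 - 1 / z) - log z ^ 3 / 6 -
      π ^ 2 / 6 * log z + 1 / 2 * (log z * (log z * log (1 - z)))) (by norm_num)
    ((((((c1.add c2).add c3).sub ((cl.pow 3).div_const 6)).sub (cl.const_mul (π ^ 2 / 6)))).add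
      ((cl.mul continuousOn_log_mul_log_one_sub).const_mul (1 / 2))) (fun x hx => ?_)
  · have e : (1 : ℝ) - 1 / (1 / 2) = -1 := by norm_num
    have e2 : (1 : ℝ) - 1 / 2 = 1 / 2 := by norm_num
    have e3 : log (1 / 2) = -log 2 := by rw [one_div, log_inv]
    simp only [e, e2, e3, polylog_three_at_neg_one, log_one, sub_self, div_one, polylog_zero] at h
    linear_combination (1 / 2) * h
  · have hpos : 0 < x := by linarith [hx.1]
    have h0 : x ≠ 0 := hpos.ne'
    have h1 : 1 - x ≠ 0 := by linarith [hx.2]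
    obtain ⟨d1, d2, d3⟩ := hasDerivAt_polylog_parts 2 hx
    have dl := hasDerivAt_log h0
    have d4 := dl.mul (dl.mul (((hasDerivAt_id x).const_sub 1).log h1))
    have e1 := dilog_reflection (Set.Ioo_subset_Icc_self hx)
    have e2 := dilog_landen (Set.Ioo_subset_Icc_self hx)
    refine (((((d1.add d2).add d3).sub ((dl.pow 3).div_const 6)).sub
      (dl.const_mul (π ^ 2 / 6))).add (d4.const_mul (1 / 2))).congr_deriv ?_
    simp only [id]
    have e3 : polylog 2 x = π ^ 2 / 6 - log x * log (1 - x) - polylog 2 (1 - x) := by linarith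
    have e4 : polylog 2 (1 - 1 / x) = - polylog 2 (1 - x) - log x ^ 2 / 2 := by linarith
    rw [e3, e4]
    simp only [Pi.mul_apply]
    field_simp
    ring

/-! ### The logarithm of `1 - e^{-x}` near `0` -/

lemma tendsto_euler_sinh_prod (t : ℝ) :
    Filter.Tendsto (fun n : ℕ => π * t * ∏ j ∈ Finset.range n, (1 + t ^ 2 / ((j : ℝ) + 1) ^ 2))
      Filter.atTop (nhds (sinh (π * t))) := by
  have h := (Complex.continuous_im.tendsto _).comp
    (Complex.tendsto_euler_sin_prod ((t : ℂ) * Complex.I))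
  have e1 : (Complex.sin (π * ((t : ℂ) * Complex.I))).im = sinh (π * t) := by
    rw [← mul_assoc, Complex.sin_mul_I, ← Complex.ofReal_mul, ← Complex.ofReal_sinh,
      Complex.im_ofReal_mul, Complex.I_im, mul_one]
  rw [e1] at h
  refine h.congr fun n => ?_
  have e2 : (π : ℂ) * ((t : ℂ) * Complex.I) * ∏ j ∈ Finset.range n,
      (1 - ((t : ℂ) * Complex.I) ^ 2 / ((j : ℂ) + 1) ^ 2) =
      ((π * t * ∏ j ∈ Finset.range n, (1 + t ^ 2 / ((j : ℝ) + 1) ^ 2) : ℝ) : ℂ) * Complex.I := by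
    have : ∀ j : ℕ, (1 - ((t : ℂ) * Complex.I) ^ 2 / ((j : ℂ) + 1) ^ 2) =
        1 + (t : ℂ) ^ 2 / ((j : ℂ) + 1) ^ 2 := by
      intro j; rw [mul_pow, Complex.I_sq]; ring
    simp only [this]
    push_cast
    ring
  simp only [Function.comp_apply]
  rw [e2, Complex.im_ofReal_mul, Complex.I_im, mul_one]

lemma hasSum_log_sinh {t : ℝ} (ht : 0 < t) :
    HasSum (fun j : ℕ => log (1 + t ^ 2 / ((j : ℝ) + 1) ^ 2))
      (log (sinh (π * t)) - log (π * t)) := by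
  have hπt : 0 < π * t := by positivity
  rw [hasSum_iff_tendsto_nat_of_nonneg]
  · have h := ((tendsto_euler_sinh_prod t).log (sinh_pos_iff.mpr hπt).ne').sub_const (log (π * t))
    refine h.congr fun n => ?_
    rw [log_mul hπt.ne' (Finset.prod_pos fun j _ => by positivity).ne',
      log_prod (fun j _ => by positivity)]
    ring
  · intro j
    exact log_nonneg (by linarith [show 0 ≤ t ^ 2 / ((j : ℝ) + 1) ^ 2 by positivity])

lemma zetaR_even (n : ℕ) :
    zetaR (2 * ((n : ℝ) + 1)) = ∑' j : ℕ, 1 / ((j : ℝ) + 1) ^ (2 * (n + 1)) := by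
  rw [← zetaR_natCast (by omega)]; push_cast; rfl

/-- Expanding each factor of the product for `sinh` and exchanging the two sums. -/
lemma tsum_zeta_even {t : ℝ} (ht : 0 < t) (ht1 : t < 1) :
    ∑' n : ℕ, (-1) ^ n * zetaR (2 * ((n : ℝ) + 1)) / ((n : ℝ) + 1) * t ^ (2 * (n + 1)) =
      log (sinh (π * t)) - log (π * t) := by
  obtain ⟨f, hf⟩ : ∃ f : ℕ → ℕ → ℝ, f = fun j n : ℕ =>
    (-1) ^ n / ((n : ℝ) + 1) * t ^ (2 * (n + 1)) * (1 / ((j : ℝ) + 1) ^ (2 * (n + 1))) := ⟨_, rfl⟩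
  have ht2 : t ^ 2 < 1 := by nlinarith
  have hsum : Summable (Function.uncurry f) := by
    have hg : Summable (fun n : ℕ => (t ^ 2) ^ (n + 1)) :=
      (summable_nat_add_iff 1).mpr (summable_geometric_of_lt_one (by positivity) ht2)
    refine ((summable_inv_succ_pow (le_refl 2)).mul_of_nonneg hg
      (fun j => by simp only [Pi.zero_apply]; positivity)
      (fun j => by simp only [Pi.zero_apply]; positivity)).of_norm_bounded ?_
    rintro ⟨j, n⟩
    simp only [Function.uncurry, hf]
    rw [norm_mul, norm_mul, norm_div, norm_pow, norm_neg, norm_one, one_pow,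
      Real.norm_of_nonneg (by positivity : (0 : ℝ) ≤ (n : ℝ) + 1),
      Real.norm_of_nonneg (by positivity : (0 : ℝ) ≤ t ^ (2 * (n + 1))),
      Real.norm_of_nonneg (by positivity : (0 : ℝ) ≤ 1 / ((j : ℝ) + 1) ^ (2 * (n + 1))),
      mul_comm, pow_mul t]
    have h1 : 1 / ((n : ℝ) + 1) ≤ 1 :=
      div_le_one_of_le₀ (by linarith [n.cast_nonneg (α := ℝ)]) (by positivity)
    have h2 : 1 / ((j : ℝ) + 1) ^ (2 * (n + 1)) ≤ 1 / ((j : ℝ) + 1) ^ 2 := by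
      apply one_div_le_one_div_of_le (by positivity)
      exact pow_le_pow_right₀ (by linarith [j.cast_nonneg (α := ℝ)]) (by omega)
    refine mul_le_mul h2 ?_ (by positivity) (by positivity)
    exact mul_le_of_le_one_left (by positivity) h1
  have hj : ∀ j : ℕ, ∑' n, f j n = log (1 + t ^ 2 / ((j : ℝ) + 1) ^ 2) := by
    intro j
    have hu0 : 0 ≤ t ^ 2 / ((j : ℝ) + 1) ^ 2 := by positivity
    have hu1 : t ^ 2 / ((j : ℝ) + 1) ^ 2 < 1 := by
      rw [div_lt_one (by positivity)]
      nlinarith [j.cast_nonneg (α := ℝ)]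
    have h := (Real.hasSum_pow_div_log_of_abs_lt_one
      (x := -(t ^ 2 / ((j : ℝ) + 1) ^ 2)) (by rwa [abs_neg, abs_of_nonneg hu0])).neg
    rw [neg_neg, sub_neg_eq_add] at h
    rw [← h.tsum_eq]
    refine tsum_congr fun n => ?_
    simp only [hf]
    rw [neg_pow (t ^ 2 / ((j : ℝ) + 1) ^ 2), div_pow, ← pow_mul, ← pow_mul, pow_succ (-1 : ℝ) n]
    ring
  have hn : ∀ n : ℕ, ∑' j, f j n =
      (-1) ^ n * zetaR (2 * ((n : ℝ) + 1)) / ((n : ℝ) + 1) * t ^ (2 * (n + 1)) := by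
    intro n
    simp only [hf]
    rw [tsum_mul_left, ← zetaR_even]
    ring
  rw [← (hasSum_log_sinh ht).tsum_eq, ← tsum_congr hj, ← tsum_congr hn]
  exact hsum.tsum_comm

/-- The coefficient of `x ^ (2 * n + 2)` in the Taylor series of `log (sinh (x / 2) / (x / 2))`. -/
noncomputable def logSinhCoeff (n : ℕ) : ℝ :=
  (-1) ^ n * zetaR (2 * ((n : ℝ) + 1)) / ((n : ℝ) + 1) / (2 * π) ^ (2 * (n + 1))

lemma abs_logSinhCoeff_le (n : ℕ) : |logSinhCoeff n| ≤ ∑' j : ℕ, 1 / ((j : ℝ) + 1) ^ 2 := by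
  have hz : zetaR (2 * ((n : ℝ) + 1)) ≤ ∑' j : ℕ, 1 / ((j : ℝ) + 1) ^ 2 := by
    rw [zetaR_even]
    refine (summable_inv_succ_pow (by omega)).tsum_le_tsum (fun j => ?_)
      (summable_inv_succ_pow le_rfl)
    apply one_div_le_one_div_of_le (by positivity)
    exact pow_le_pow_right₀ (by linarith [j.cast_nonneg (α := ℝ)]) (by omega)
  have hz0 : 0 ≤ zetaR (2 * ((n : ℝ) + 1)) := by
    rw [zetaR_even]
    exact tsum_nonneg fun j => by positivity
  have hp : 1 ≤ (2 * π) ^ (2 * (n + 1)) := one_le_pow₀ (by linarith [pi_gt_three])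
  unfold logSinhCoeff
  rw [abs_div, abs_div, abs_mul, abs_pow, abs_neg, abs_one, one_pow, one_mul, abs_of_nonneg hz0,
    abs_of_nonneg (by positivity : (0 : ℝ) ≤ (n : ℝ) + 1),
    abs_of_nonneg (zero_le_one.trans hp)]
  refine (div_le_self (by positivity) hp).trans
    ((div_le_self hz0 (by linarith [n.cast_nonneg (α := ℝ)])).trans hz)

lemma tsum_logSinhCoeff {x : ℝ} (hx : 0 < x) (hx1 : x < 1) :
    ∑' n : ℕ, logSinhCoeff n * x ^ (2 * n + 2) = x / 2 + log (1 - exp (-x)) - log x := by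
  have h2π : 0 < 2 * π := by positivity
  have h := tsum_zeta_even (t := x / (2 * π)) (by positivity)
    (by rw [div_lt_one h2π]; linarith [pi_gt_three])
  have e1 : π * (x / (2 * π)) = x / 2 := by field_simp
  have e2 : sinh (x / 2) = exp (x / 2) * (1 - exp (-x)) / 2 := by
    rw [sinh_eq, mul_sub, ← exp_add]; ring_nf
  have e3 : 0 < 1 - exp (-x) := by
    have : exp (-x) < 1 := exp_lt_one_iff.mpr (by linarith)
    linarith
  rw [e1, e2, log_div (by positivity) (by norm_num), log_mul (by positivity) e3.ne', log_exp,
    log_div hx.ne' (by norm_num)] at h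
  calc _ = _ := tsum_congr fun n => ?_
    _ = _ := h
    _ = _ := by ring
  rw [logSinhCoeff, div_pow, show 2 * n + 2 = 2 * (n + 1) by ring]
  ring

/-! ### The expansion of the trilogarithm -/

/-- The expansion of `Li₃(e^{-x})` at `0`. Both sides agree at `0` together with their first
derivatives, and their second derivatives are `-log (1 - e^{-x})`. -/
lemma trilog_exp_neg {x : ℝ} (hx : 0 ≤ x) (hx1 : x < 1) :
    polylog 3 (exp (-x)) = polylog 3 1 - π ^ 2 / 6 * x + 3 / 4 * x ^ 2 - x * (x * log x) / 2 +
      x ^ 3 / 12 - ∑' n : ℕ, logSinhCoeff n / (2 * n + 3) / (2 * n + 4) * x ^ (2 * n + 4) := by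
  obtain ⟨C, hC⟩ : ∃ C, ∀ n, |logSinhCoeff n| ≤ C := ⟨_, abs_logSinhCoeff_le⟩
  have hC' : ∀ n : ℕ, |logSinhCoeff n / (2 * n + 3)| ≤ C := fun n => by
    rw [abs_div, abs_of_nonneg (by positivity : (0 : ℝ) ≤ 2 * n + 3)]
    exact (div_le_self (abs_nonneg _) (by linarith [n.cast_nonneg (α := ℝ)])).trans (hC n)
  have dP1 : ∀ y : ℝ, |y| < 1 → HasDerivAt
      (fun y : ℝ => ∑' n : ℕ, logSinhCoeff n / (2 * n + 3) * y ^ (2 * n + 3))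
      (∑' n : ℕ, logSinhCoeff n * y ^ (2 * n + 2)) y := fun y hy => by
    have h := hasDerivAt_powerSeries 2 2 (by norm_num) _ C hC hy
    convert h using 6
    push_cast; ring
  have dP2 : ∀ y : ℝ, |y| < 1 → HasDerivAt
      (fun y : ℝ => ∑' n : ℕ, logSinhCoeff n / (2 * n + 3) / (2 * n + 4) * y ^ (2 * n + 4))
      (∑' n : ℕ, logSinhCoeff n / (2 * n + 3) * y ^ (2 * n + 3)) y := fun y hy => by
    have h := hasDerivAt_powerSeries 2 3 (by norm_num) _ C hC' hy
    convert h using 6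
    push_cast; ring
  have habs : ∀ z : ℝ, z < 1 → ∀ y ∈ Set.Icc 0 z, |y| < 1 := fun z hz y hy =>
    abs_lt.mpr ⟨by linarith [hy.1], hy.2.trans_lt hz⟩
  have hmem : ∀ z : ℝ, ∀ y ∈ Set.Icc 0 z, exp (-y) ∈ Set.Icc (-1 : ℝ) 1 := fun z y hy =>
    ⟨by linarith [exp_pos (-y)], exp_le_one_iff.mpr (by linarith [hy.1])⟩
  have hexp : ∀ y : ℝ, HasDerivAt (fun y => exp (-y)) (-exp (-y)) y := fun y => by
    simpa using (hasDerivAt_neg y).exp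
  have hlt : ∀ y : ℝ, 0 < y → |exp (-y)| < 1 := fun y hy => by
    rw [abs_of_pos (exp_pos _)]; exact exp_lt_one_iff.mpr (by linarith)
  have cLi : ∀ s : ℕ, 2 ≤ s → ∀ z : ℝ,
      ContinuousOn (fun y => polylog s (exp (-y))) (Set.Icc 0 z) := fun s hs z =>
    (continuousOn_polylog hs).comp (by fun_prop) (hmem z)
  have dLi : ∀ s : ℕ, ∀ y : ℝ, 0 < y →
      HasDerivAt (fun y => polylog (s + 1) (exp (-y))) (-polylog s (exp (-y))) y := fun s y hy => by
    refine ((hasDerivAt_polylog s (hlt y hy) (exp_pos _).ne').comp y (hexp y)).congr_deriv ?_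
    have := (exp_pos (-y)).ne'
    field_simp
  have dlog : ∀ y : ℝ, 0 < y → HasDerivAt (fun y => y * log y) (log y + 1) y := fun y hy =>
    hasDerivAt_mul_log hy.ne'
  have first : ∀ z : ℝ, 0 ≤ z → z < 1 → polylog 2 (exp (-z)) - π ^ 2 / 6 + z - z * log z +
      z ^ 2 / 4 - ∑' n : ℕ, logSinhCoeff n / (2 * n + 3) * z ^ (2 * n + 3) = 0 := by
    intro z hz hz1
    have h := eq_of_hasDerivAt_zero (a := 0) (b := z)
      (f := fun z => polylog 2 (exp (-z)) - π ^ 2 / 6 + z - z * log z +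
        z ^ 2 / 4 - ∑' n : ℕ, logSinhCoeff n / (2 * n + 3) * z ^ (2 * n + 3)) hz ?_ ?_
    · rw [← h]
      simp [polylog_two_at_one]
    · refine ((((((cLi 2 le_rfl z).sub continuousOn_const).add continuousOn_id).sub
        continuous_mul_log.continuousOn).add (by fun_prop)).sub ?_)
      exact fun y hy => (dP1 y (habs z hz1 y hy)).continuousAt.continuousWithinAt
    · intro y hy
      have hy0 := hy.1
      have hy1 : y < 1 := hy.2.trans hz1
      refine ((((((dLi 1 y hy0).sub_const (π ^ 2 / 6)).add (hasDerivAt_id y)).sub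
        (dlog y hy0)).add ((hasDerivAt_pow 2 y).div_const 4)).sub
        (dP1 y (abs_lt.mpr ⟨by linarith, hy1⟩))).congr_deriv ?_
      rw [tsum_logSinhCoeff hy0 hy1, polylog_one_eq (hlt y hy0)]
      push_cast
      ring
  have h := eq_of_hasDerivAt_zero (a := 0) (b := x)
    (f := fun x => polylog 3 (exp (-x)) - (polylog 3 1 - π ^ 2 / 6 * x + 3 / 4 * x ^ 2 -
      x * (x * log x) / 2 + x ^ 3 / 12 -
      ∑' n : ℕ, logSinhCoeff n / (2 * n + 3) / (2 * n + 4) * x ^ (2 * n + 4))) hx ?_ ?_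
  · simp only [neg_zero, exp_zero] at h
    simp at h
    linarith
  · refine (cLi 3 (by norm_num) x).sub (((ContinuousOn.sub (by fun_prop)
      ((continuousOn_id.mul continuous_mul_log.continuousOn).div_const 2)).add
      (by fun_prop)).sub ?_)
    exact fun y hy => (dP2 y (habs x hx1 y hy)).continuousAt.continuousWithinAt
  · intro y hy
    have hy0 := hy.1
    have hy1 : y < 1 := hy.2.trans hx1
    have e := first y hy0.le hy1
    refine ((dLi 2 y hy0).sub ((((((hasDerivAt_id y).const_mul (π ^ 2 / 6)).const_sub
      (polylog 3 1)).add ((hasDerivAt_pow 2 y).const_mul (3 / 4))).sub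
      (((hasDerivAt_id y).mul (dlog y hy0)).div_const 2)).add
      ((hasDerivAt_pow 3 y).div_const 12) |>.sub
      (dP2 y (abs_lt.mpr ⟨by linarith, hy1⟩)))).congr_deriv ?_
    simp only [id]
    push_cast
    linear_combination -e

/-- `ζ(3) = (2π²/3)·log 2 − 6·(log 2)² + (2/3)·(log 2)³ + 4·(log 2)²·log(log 2)
  + 16·(log 2)² ∑_{n=1}^∞ (−1)^{n+1}·ζ(2n)/(2n(2n+1)(2n+2)) · (log 2/(2π))^{2n}`. -/
theorem zeta3_log_two_repr :
    zetaR 3 = 2 * π ^ 2 / 3 * Real.log 2 - 6 * (Real.log 2) ^ 2 +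
      2 / 3 * (Real.log 2) ^ 3 + 4 * (Real.log 2) ^ 2 * Real.log (Real.log 2) +
      16 * (Real.log 2) ^ 2 * ∑' n : ℕ,
        (-1 : ℝ) ^ (n + 1 + 1) * zetaR (2 * (n + 1)) /
            (2 * (n + 1) * (2 * (n + 1) + 1) * (2 * (n + 1) + 2)) *
          (Real.log 2 / (2 * π)) ^ (2 * (n + 1)) := by
  have hL0 : 0 < log 2 := log_pos (by norm_num)
  have hL1 : log 2 < 1 := by linarith [log_two_lt_d9]
  have h := trilog_exp_neg hL0.le hL1
  have e : exp (-log 2) = 1 / 2 := by rw [exp_neg, exp_log (by norm_num), one_div]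
  have h3 : polylog 3 1 = zetaR 3 := by simpa using polylog_at_one (show 2 ≤ 3 by norm_num)
  rw [e, trilog_half, h3] at h
  have hS : ∑' n : ℕ, logSinhCoeff n / (2 * n + 3) / (2 * n + 4) * log 2 ^ (2 * n + 4) =
      2 * log 2 ^ 2 * ∑' n : ℕ, (-1 : ℝ) ^ (n + 1 + 1) * zetaR (2 * (n + 1)) /
            (2 * (n + 1) * (2 * (n + 1) + 1) * (2 * (n + 1) + 2)) *
          (Real.log 2 / (2 * π)) ^ (2 * (n + 1)) := by
    rw [← tsum_mul_left]
    refine tsum_congr fun n => ?_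
    have h1 : (n + 1 : ℝ) ≠ 0 := by positivity
    have h2 : (2 * n + 3 : ℝ) ≠ 0 := by positivity
    have h4 : (2 * n + 4 : ℝ) ≠ 0 := by positivity
    rw [logSinhCoeff, div_pow, show 2 * n + 4 = 2 * (n + 1) + 2 by ring, pow_add (log 2),
      pow_succ (-1 : ℝ), pow_succ (-1 : ℝ),
      show (2 * (n + 1) + 1 : ℝ) = 2 * n + 3 by ring,
      show (2 * (n + 1) + 2 : ℝ) = 2 * n + 4 by ring]
    field_simp
  rw [hS] at h
  linear_combination (-8) * h
end

section
/- For every positive integer n, ∑_{k=1}^∞ cos(πk/3)/k^{2n+1} = (1/2)·(1 − 2^{−2n})·(1 − 3^{−2n})·ζ(2n+1). -/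
/-!
The function `k ↦ cos (π k / 3)` has period `6` and depends only on `gcd k 6`, so it is a
combination of indicators of divisibility:
`cos (π k / 3) = (1 - 2 [2 ∣ k] - 3 [3 ∣ k] + 6 [6 ∣ k]) / 2` (`cos_pi_mul_div_three`).
Restricting `∑ 1 / k ^ s` to the multiples of `d` gives `ζ(s) / d ^ s` (`hasSum_multiples`), so the
series equals `(1 - 2 ^ (1 - s) - 3 ^ (1 - s) + 6 ^ (1 - s)) ζ(s) / 2`, which factors as claimed
for `s = 2 n + 1`.
-/

open Real

lemma cos_pi_mul_div_three (k : ℕ) :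
    Real.cos (π * k / 3) = 1 / 2 * (1 - 2 * (if 2 ∣ k then 1 else 0)
      - 3 * (if 3 ∣ k then 1 else 0) + 6 * (if 6 ∣ k then 1 else 0)) := by
  have hk : k = 6 * (k / 6) + k % 6 := (Nat.div_add_mod k 6).symm
  have hr : k % 6 < 6 := Nat.mod_lt _ (by norm_num)
  generalize k / 6 = q at hk
  generalize k % 6 = r at hk hr
  subst hk
  have h : π * ((6 * q + r : ℕ) : ℝ) / 3 = π * r / 3 + q * (2 * π) := by
    push_cast; ring
  rw [h, Real.cos_add_nat_mul_two_pi]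
  have h2 : (2 ∣ 6 * q + r) ↔ 2 ∣ r := by omega
  have h3 : (3 ∣ 6 * q + r) ↔ 3 ∣ r := by omega
  have h6 : (6 ∣ 6 * q + r) ↔ 6 ∣ r := by omega
  simp only [h2, h3, h6]
  interval_cases r
  · norm_num
  · norm_num
  · rw [show π * ((2 : ℕ) : ℝ) / 3 = π - π / 3 by push_cast; ring, Real.cos_pi_sub]
    norm_num
  · rw [show π * ((3 : ℕ) : ℝ) / 3 = π by push_cast; ring]
    norm_num
  · rw [show π * ((4 : ℕ) : ℝ) / 3 = π / 3 + π by push_cast; ring, Real.cos_add_pi]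
    norm_num
  · rw [show π * ((5 : ℕ) : ℝ) / 3 = 2 * π - π / 3 by push_cast; ring, Real.cos_two_pi_sub]
    norm_num

lemma hasSum_multiples {s d : ℕ} (hd : 0 < d) {z : ℝ}
    (hz : HasSum (fun k : ℕ => 1 / (k : ℝ) ^ s) z) :
    HasSum (fun k : ℕ => (if d ∣ k then (1 : ℝ) else 0) * (1 / (k : ℝ) ^ s))
      (1 / (d : ℝ) ^ s * z) := by
  have hinj : Function.Injective (fun m : ℕ => d * m) := fun a b h =>
    Nat.eq_of_mul_eq_mul_left hd h
  refine (hinj.hasSum_iff ?_).1 ?_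
  · intro k hk
    have : ¬ d ∣ k := fun ⟨m, hm⟩ => hk ⟨m, hm.symm⟩
    simp [this]
  · refine (hz.mul_left (1 / (d : ℝ) ^ s)).congr_fun ?_
    intro m
    simp [mul_pow, mul_comm]

lemma hasSum_zetaR {n : ℕ} (hn : 1 ≤ n) :
    HasSum (fun k : ℕ => 1 / (k : ℝ) ^ (2 * n + 1)) (zetaR (2 * n + 1)) := by
  have hs : Summable (fun k : ℕ => 1 / (k : ℝ) ^ (2 * n + 1)) :=
    Real.summable_one_div_nat_pow.2 (by omega)
  have hz : zetaR (2 * n + 1) = ∑' k : ℕ, 1 / (k : ℝ) ^ (2 * n + 1) := by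
    have h := zeta_nat_eq_tsum_of_gt_one (k := 2 * n + 1) (by omega)
    have h' : riemannZeta ((2 * n + 1 : ℝ) : ℂ)
        = ((∑' k : ℕ, 1 / (k : ℝ) ^ (2 * n + 1) : ℝ) : ℂ) := by
      push_cast at h ⊢
      exact h
    rw [zetaR, h', Complex.ofReal_re]
  rw [hz]
  exact hs.hasSum

/-- For every positive integer `n`,
`∑_{k=1}^∞ cos(πk/3)/k^{2n+1} = (1/2)·(1 − 2^{−2n})·(1 − 3^{−2n})·ζ(2n+1)`. -/
theorem clausen_pi_div_three (n : ℕ) (hn : 1 ≤ n) :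
    ∑' k : ℕ, Real.cos (π * (k + 1) / 3) / (k + 1) ^ (2 * n + 1) =
      1 / 2 * (1 - (2 : ℝ) ^ (-(2 * (n : ℤ)))) * (1 - (3 : ℝ) ^ (-(2 * (n : ℤ)))) *
        zetaR (2 * n + 1) := by
  have hz := hasSum_zetaR hn
  have h2 := hasSum_multiples (d := 2) (by norm_num) hz
  have h3 := hasSum_multiples (d := 3) (by norm_num) hz
  have h6 := hasSum_multiples (d := 6) (by norm_num) hz
  have H := (((hz.sub (h2.mul_left 2)).sub (h3.mul_left 3)).add (h6.mul_left 6)).mul_left (1 / 2)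
  have H' := H.congr_fun (g := fun k : ℕ => Real.cos (π * k / 3) / (k : ℝ) ^ (2 * n + 1))
    (fun k => by rw [cos_pi_mul_div_three]; ring)
  -- The term at `k = 0` is `1 / 0 ^ (2 * n + 1) = 0`, so the index may start at `1`.
  have H1 := (hasSum_nat_add_iff' 1).2 H'
  have e : ∀ a : ℝ, a ^ (-(2 * (n : ℤ))) = 1 / a ^ (2 * n) := by
    intro a
    rw [zpow_neg, one_div]
    norm_cast
  have h6pow : (6 : ℝ) ^ (2 * n) = 2 ^ (2 * n) * 3 ^ (2 * n) := by
    rw [← mul_pow]; norm_num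
  have H2 := H1.tsum_eq
  push_cast at H2
  rw [H2, e, e]
  simp only [Finset.sum_range_one, pow_succ _ (2 * n), h6pow]
  field_simp
  simp
  ring
end
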